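/- arXiv:1508.02051 — 2 statements merged into one kernel-verified Lean document; each statement's English description precedes it below -/
import Mathlib

section
/- Let d ≥ 3, let Ω ⊂ ℝ^d be a bounded set, let n : ℝ^d → ℝ^d be a bounded measurable vector field, and let φ : ℝ^d → ℝ be integrable on ∂Ω with respect to the (d−1)-dimensional Hausdorff measure σ. Then the double layer potential D_Ω φ(x) := ∫_{∂Ω} ((y−x)·n(y))/(ω_d|x−y|^d) φ(y) dσ(y) is well defined and harmonic on the open set ℝ^d \ ∂Ω. -/
/-!
The double layer potential is a superposition `∫ Ψ (x - y) (w y)` over the compact set `frontier Ω`,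
where `Ψ z = ‖z‖⁻ᵈ ⟪z, ·⟫` and `w y = -(φ y / ω_d) n y` is an integrable vector density. The kernel `Ψ`
is smooth away from `0`, and for `x` near a point off the compact set all differences `x - y` stay
in a compact set avoiding `0`. So each derivative of the integrand is dominated by a constant times
`‖w y‖` (`exists_local_bound`), and differentiation under the integral sign is legitimate
(`hasFDerivAt_kernel`, `fderiv_kernel_apply`). Iterating gives smoothness (`contDiffOn_kernel`), and
the Laplacian passes inside the integral, where it vanishes because the kernel is harmonic
(`laplacian_dlKernel`). The value of `ω_d` plays no role.
-/

open MeasureTheory Metric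
open scoped RealInnerProductSpace

/-- ω_d: the (d-1)-dimensional Hausdorff measure of the unit sphere in ℝ^d. -/
noncomputable def omegaD (d : ℕ) : ℝ :=
  (μH[(d : ℝ) - 1] (Metric.sphere (0 : EuclideanSpace ℝ (Fin d)) 1)).toReal

/-- The fundamental solution Γ(x) = κ_d |x|^{2-d}, κ_d = 1/(ω_d (2-d)). -/
noncomputable def fundSol (d : ℕ) (x : EuclideanSpace ℝ (Fin d)) : ℝ :=
  (1 / (omegaD d * (2 - (d : ℝ)))) * ‖x‖ ^ ((2 : ℝ) - d)

/-- The Laplacian Δf(x) = Σ_i ∂²f/∂x_i²(x). -/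
noncomputable def laplacian {d : ℕ} (f : EuclideanSpace ℝ (Fin d) → ℝ)
    (x : EuclideanSpace ℝ (Fin d)) : ℝ :=
  ∑ i : Fin d, fderiv ℝ (fun y => fderiv ℝ f y (EuclideanSpace.single i 1)) x
    (EuclideanSpace.single i 1)

/-- A function is harmonic on an open set U if it is C² there and its Laplacian vanishes. -/
def IsHarmonicOn {d : ℕ} (f : EuclideanSpace ℝ (Fin d) → ℝ)
    (U : Set (EuclideanSpace ℝ (Fin d))) : Prop :=
  ContDiffOn ℝ 2 f U ∧ ∀ x ∈ U, laplacian f x = 0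

section
open Filter Topology

/-- A kernel continuous off the origin is bounded on `x - y` for `x` near a point outside a compact
set `S` and `y ∈ S`, because these differences fill a compact set avoiding `0`. This supplies the
dominating function for every differentiation under the integral sign. -/
theorem exists_local_bound {E G : Type} [NormedAddCommGroup E] [NormedAddCommGroup G]
    {Ψ : E → G} (hΨ : ContinuousOn Ψ {0}ᶜ) {S : Set E} (hS : IsCompact S) [ProperSpace E]
    {x₀ : E} (hx₀ : x₀ ∉ S) :
    ∃ s ∈ 𝓝 x₀, ∃ C : ℝ, (∀ x ∈ s, x ∉ S) ∧ ∀ x ∈ s, ∀ y ∈ S, ‖Ψ (x - y)‖ ≤ C := by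
  obtain ⟨δ, hδ, hsub⟩ := Metric.nhds_basis_closedBall.mem_iff.1
    (hS.isClosed.isOpen_compl.mem_nhds hx₀)
  have hK : IsCompact ((fun p : E × E => p.1 - p.2) '' (closedBall x₀ δ ×ˢ S)) :=
    ((isCompact_closedBall x₀ δ).prod hS).image (by fun_prop)
  obtain ⟨C, hC⟩ := hK.exists_bound_of_continuousOn (hΨ.mono (by
    rintro _ ⟨⟨x, y⟩, ⟨hx, hy⟩, rfl⟩ h
    have : x = y := sub_eq_zero.1 h
    exact hsub hx (this ▸ hy)))
  exact ⟨closedBall x₀ δ, closedBall_mem_nhds x₀ hδ, C, fun x hx => hsub hx,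
    fun x hx y hy => hC _ ⟨(x, y), ⟨hx, hy⟩, rfl⟩⟩

theorem aesm_kernel {E W F : Type} [NormedAddCommGroup E] [MeasurableSpace E] [BorelSpace E]
    [NormedAddCommGroup W] [NormedSpace ℝ W] [NormedAddCommGroup F] [NormedSpace ℝ F]
    {μ : Measure E} {S : Set E} {Ψ : E → W →L[ℝ] F} (hΨ : ContinuousOn Ψ {0}ᶜ) (hS : IsCompact S)
    {w : E → W} (hw : IntegrableOn w S μ) {x : E} (hx : x ∉ S) :
    AEStronglyMeasurable (fun y => Ψ (x - y) (w y)) (μ.restrict S) := by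
  have h : ContinuousOn (fun y => Ψ (x - y)) S := hΨ.comp (by fun_prop) (by
    intro y hy h
    exact hx ((sub_eq_zero.1 h) ▸ hy))
  have h1 : AEStronglyMeasurable (fun y => Ψ (x - y)) (μ.restrict S) :=
    h.aestronglyMeasurable_of_isCompact hS hS.measurableSet
  have hev := (isBoundedBilinearMap_apply (𝕜 := ℝ) (E := W) (F := F)).continuous
  exact hev.comp_aestronglyMeasurable (h1.prodMk hw.aestronglyMeasurable)

variable {E W F : Type} [NormedAddCommGroup E]
  [NormedAddCommGroup W] [NormedSpace ℝ W] [NormedAddCommGroup F] [NormedSpace ℝ F]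

variable [MeasurableSpace E] [BorelSpace E] [ProperSpace E]
  {μ : Measure E} {S : Set E}

theorem integrable_kernel {Ψ : E → W →L[ℝ] F} (hΨ : ContinuousOn Ψ {0}ᶜ) (hS : IsCompact S)
    {w : E → W} (hw : IntegrableOn w S μ) {x : E} (hx : x ∉ S) :
    IntegrableOn (fun y => Ψ (x - y) (w y)) S μ := by
  obtain ⟨s, hs, C, -, hC⟩ := exists_local_bound hΨ hS hx
  refine Integrable.mono' (hw.norm.const_mul C) (aesm_kernel hΨ hS hw hx) ?_
  filter_upwards [ae_restrict_mem hS.measurableSet] with y hy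
  exact (ContinuousLinearMap.le_opNorm _ _).trans
    (mul_le_mul_of_nonneg_right (hC x (mem_of_mem_nhds hs) y hy) (norm_nonneg _))

theorem continuousOn_kernel {Ψ : E → W →L[ℝ] F} (hΨ : ContinuousOn Ψ {0}ᶜ) (hS : IsCompact S)
    {w : E → W} (hw : IntegrableOn w S μ) :
    ContinuousOn (fun x => ∫ y in S, Ψ (x - y) (w y) ∂μ) Sᶜ := by
  intro x hx
  refine ContinuousAt.continuousWithinAt ?_
  obtain ⟨s, hs, C, hsS, hC⟩ := exists_local_bound hΨ hS hx
  refine continuousAt_of_dominated (bound := fun y => C * ‖w y‖) ?_ ?_ (hw.norm.const_mul C) ?_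
  · filter_upwards [hs] with x hx using aesm_kernel hΨ hS hw (hsS x hx)
  · filter_upwards [hs] with x hx
    filter_upwards [ae_restrict_mem hS.measurableSet] with y hy
    exact (ContinuousLinearMap.le_opNorm _ _).trans
      (mul_le_mul_of_nonneg_right (hC x hx y hy) (norm_nonneg _))
  · filter_upwards [ae_restrict_mem hS.measurableSet] with y hy
    have h0 : x - y ∈ ({0}ᶜ : Set E) := fun h => hx ((sub_eq_zero.1 h) ▸ hy)
    have h1 : ContinuousAt Ψ (x - y) := hΨ.continuousAt (isOpen_compl_singleton.mem_nhds h0)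
    have h2 : ContinuousAt (fun x => Ψ (x - y)) x :=
      ContinuousAt.comp (f := fun x => x - y) h1 (by fun_prop)
    exact h2.clm_apply continuousAt_const

variable [NormedSpace ℝ E]

/-- Differentiation under the integral sign. The derivative is again a potential of the same form,
whose kernel is the derivative of `Ψ` with its two arguments flipped; this is what makes the
induction in `contDiffOn_kernel` possible. -/
theorem hasFDerivAt_kernel {Ψ : E → W →L[ℝ] F} (hΨ : ContDiffOn ℝ 1 Ψ {0}ᶜ) (hS : IsCompact S)
    {w : E → W} (hw : IntegrableOn w S μ) {x : E} (hx : x ∉ S) :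
    HasFDerivAt (fun x => ∫ y in S, Ψ (x - y) (w y) ∂μ)
      (∫ y in S, (fderiv ℝ Ψ (x - y)).flip (w y) ∂μ) x := by
  have hΨ' : ContinuousOn (fun z => (fderiv ℝ Ψ z).flip) {0}ᶜ :=
    (ContinuousLinearMap.flipₗᵢ ℝ E W F).continuous.comp_continuousOn
      (hΨ.continuousOn_fderiv_of_isOpen isOpen_compl_singleton le_rfl)
  obtain ⟨s, hs, C, hsS, hC⟩ := exists_local_bound (G := W →L[ℝ] E →L[ℝ] F) hΨ' hS hx
  refine hasFDerivAt_integral_of_dominated_of_fderiv_le (bound := fun y => C * ‖w y‖)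
    (F' := fun x y => (fderiv ℝ Ψ (x - y)).flip (w y)) hs ?_
    (integrable_kernel hΨ.continuousOn hS hw hx) (aesm_kernel hΨ' hS hw hx) ?_
    (hw.norm.const_mul C) ?_
  · filter_upwards [hs] with x hx using aesm_kernel hΨ.continuousOn hS hw (hsS x hx)
  · filter_upwards [ae_restrict_mem hS.measurableSet] with y hy x hx
    exact (ContinuousLinearMap.le_opNorm _ _).trans
      (mul_le_mul_of_nonneg_right (hC x hx y hy) (norm_nonneg _))
  · filter_upwards [ae_restrict_mem hS.measurableSet] with y hy x hx
    have h0 : x - y ∈ ({0}ᶜ : Set E) := fun h => hsS x hx ((sub_eq_zero.1 h) ▸ hy)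
    have h1 : HasFDerivAt Ψ (fderiv ℝ Ψ (x - y)) (x - y) :=
      ((hΨ.differentiableOn one_ne_zero).differentiableAt
        (isOpen_compl_singleton.mem_nhds h0)).hasFDerivAt
    have h2 := (h1.comp x ((hasFDerivAt_id x).sub_const y)).clm_apply (hasFDerivAt_const (w y) x)
    refine h2.congr_fderiv ?_
    ext v
    simp

theorem fderiv_kernel_apply {Ψ : E → W →L[ℝ] F} (hΨ : ContDiffOn ℝ 1 Ψ {0}ᶜ) (hS : IsCompact S)
    {w : E → W} (hw : IntegrableOn w S μ) {x : E} (hx : x ∉ S) (v : E) :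
    fderiv ℝ (fun x => ∫ y in S, Ψ (x - y) (w y) ∂μ) x v =
      ∫ y in S, fderiv ℝ Ψ (x - y) v (w y) ∂μ := by
  have hΨ' : ContinuousOn (fun z => (fderiv ℝ Ψ z).flip) {0}ᶜ :=
    (ContinuousLinearMap.flipₗᵢ ℝ E W F).continuous.comp_continuousOn
      (hΨ.continuousOn_fderiv_of_isOpen isOpen_compl_singleton le_rfl)
  rw [(hasFDerivAt_kernel hΨ hS hw hx).fderiv,
    ContinuousLinearMap.integral_apply (integrable_kernel hΨ' hS hw hx)]
  rfl
end

/-- The potential of a `C^k` kernel is `C^k` off the support. The target space `F` is quantified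
inside the induction, since passing to the derivative replaces `F` by `E →L[ℝ] F`. -/
theorem contDiffOn_kernel {E W : Type} [NormedAddCommGroup E] [NormedSpace ℝ E]
    [NormedAddCommGroup W] [NormedSpace ℝ W] [MeasurableSpace E] [BorelSpace E] [ProperSpace E]
    {μ : Measure E} {S : Set E} (hS : IsCompact S) {w : E → W} (hw : IntegrableOn w S μ) (k : ℕ) :
    ∀ {F : Type} [NormedAddCommGroup F] [NormedSpace ℝ F] {Ψ : E → W →L[ℝ] F},
      ContDiffOn ℝ k Ψ {0}ᶜ → ContDiffOn ℝ k (fun x => ∫ y in S, Ψ (x - y) (w y) ∂μ) Sᶜ := by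
  induction k with
  | zero =>
    intro F _ _ Ψ hΨ
    exact contDiffOn_zero.2 (continuousOn_kernel hΨ.continuousOn hS hw)
  | succ k ih =>
    intro F _ _ Ψ hΨ
    have h1 : ContDiffOn ℝ 1 Ψ {0}ᶜ := hΨ.of_le (by norm_cast; omega)
    push_cast at hΨ ⊢
    rw [contDiffOn_succ_iff_fderiv_of_isOpen hS.isClosed.isOpen_compl]
    refine ⟨fun x hx => (hasFDerivAt_kernel h1 hS hw hx).differentiableAt.differentiableWithinAt,
      by simp, ?_⟩
    have hflip : ContDiff ℝ k (fun L : E →L[ℝ] W →L[ℝ] F => L.flip) :=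
      ContinuousLinearMap.contDiff (𝕜 := ℝ) (E := E →L[ℝ] W →L[ℝ] F) (F := W →L[ℝ] E →L[ℝ] F)
        ((ContinuousLinearMap.flipₗᵢ ℝ E W F).toContinuousLinearEquiv :
          (E →L[ℝ] W →L[ℝ] F) →L[ℝ] (W →L[ℝ] E →L[ℝ] F))
    have h2 : ContDiffOn ℝ k (fun z => (fderiv ℝ Ψ z).flip) {0}ᶜ :=
      hflip.comp_contDiffOn (hΨ.fderiv_of_isOpen isOpen_compl_singleton le_rfl)
    exact (ih h2).congr fun x hx => (hasFDerivAt_kernel h1 hS hw hx).fderiv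

/-- The kernel `z ↦ ‖z‖⁻ᵈ ⟪z, ·⟫`, that is, the gradient of the fundamental solution up to a constant,
as a functional-valued map. The norm is written as a power of `‖z‖ ^ 2`, which is smooth. -/
noncomputable def dlKernel {d : ℕ} (z : EuclideanSpace ℝ (Fin d)) :
    EuclideanSpace ℝ (Fin d) →L[ℝ] ℝ :=
  (‖z‖ ^ 2) ^ (-(d : ℝ) / 2) • innerSL ℝ z

theorem hasFDerivAt_normSq_rpow {d : ℕ} (s : ℝ) {z : EuclideanSpace ℝ (Fin d)} (hz : z ≠ 0) :
    HasFDerivAt (fun z : EuclideanSpace ℝ (Fin d) => (‖z‖ ^ 2) ^ s)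
      ((2 * s * (‖z‖ ^ 2) ^ (s - 1)) • innerSL ℝ z) z := by
  have h := (hasStrictFDerivAt_norm_sq z).hasFDerivAt.rpow_const (p := s)
    (Or.inl (by positivity))
  refine h.congr_fderiv ?_
  ext v
  simp
  ring

/-- The real inner product as a linear map in both arguments; `innerSL` is formally conjugate-linear
in the first one. -/
noncomputable def innerCLM (d : ℕ) :
    EuclideanSpace ℝ (Fin d) →L[ℝ] EuclideanSpace ℝ (Fin d) →L[ℝ] ℝ := innerSL ℝ

@[simp]
theorem innerCLM_apply_apply {d : ℕ} (u v : EuclideanSpace ℝ (Fin d)) :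
    innerCLM d u v = ⟪u, v⟫ := rfl

theorem hasFDerivAt_innerSL {d : ℕ} (z : EuclideanSpace ℝ (Fin d)) :
    HasFDerivAt (fun z : EuclideanSpace ℝ (Fin d) => innerSL ℝ z) (innerCLM d) z :=
  ContinuousLinearMap.hasFDerivAt (innerCLM d)

theorem contDiffOn_dlKernel {d : ℕ} {n : WithTop ℕ∞} : ContDiffOn ℝ n (dlKernel (d := d)) {0}ᶜ := by
  intro z hz
  have hz : z ≠ 0 := hz
  refine ContDiffAt.contDiffWithinAt ?_
  exact ((contDiff_norm_sq ℝ).contDiffAt.rpow_const_of_ne (by positivity)).smul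
    (ContinuousLinearMap.contDiff (innerCLM d)).contDiffAt

theorem fderiv_dlKernel {d : ℕ} {z : EuclideanSpace ℝ (Fin d)} (hz : z ≠ 0)
    (v : EuclideanSpace ℝ (Fin d)) :
    fderiv ℝ dlKernel z v = (‖z‖ ^ 2) ^ (-(d : ℝ) / 2) • innerSL ℝ v -
      (d * (‖z‖ ^ 2) ^ (-(d : ℝ) / 2 - 1) * ⟪v, z⟫) • innerSL ℝ z := by
  have h : HasFDerivAt dlKernel _ z :=
    (hasFDerivAt_normSq_rpow (-(d : ℝ) / 2) hz).smul (hasFDerivAt_innerSL z)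
  rw [h.fderiv]
  ext u
  simp [real_inner_comm]
  ring

theorem fderiv_fderiv_dlKernel {d : ℕ} {z : EuclideanSpace ℝ (Fin d)} (hz : z ≠ 0)
    (v : EuclideanSpace ℝ (Fin d)) :
    fderiv ℝ (fun z => fderiv ℝ dlKernel z v) z v =
      (d * (d + 2) * (‖z‖ ^ 2) ^ (-(d : ℝ) / 2 - 2) * ⟪v, z⟫ ^ 2) • innerSL ℝ z
      - (d * (‖z‖ ^ 2) ^ (-(d : ℝ) / 2 - 1) * ‖v‖ ^ 2) • innerSL ℝ z
      - (2 * d * (‖z‖ ^ 2) ^ (-(d : ℝ) / 2 - 1) * ⟪v, z⟫) • innerSL ℝ v := by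
  have hev : (fun z => fderiv ℝ dlKernel z v) =ᶠ[nhds z]
      fun z => (‖z‖ ^ 2) ^ (-(d : ℝ) / 2) • innerSL ℝ v -
      (d * (‖z‖ ^ 2) ^ (-(d : ℝ) / 2 - 1) * ⟪v, z⟫) • innerSL ℝ z := by
    filter_upwards [isOpen_compl_singleton.mem_nhds hz] with z hz using fderiv_dlKernel hz v
  rw [hev.fderiv_eq]
  have h := ((hasFDerivAt_normSq_rpow (-(d : ℝ) / 2) hz).smul_const (innerSL ℝ v)).sub
    ((((hasFDerivAt_normSq_rpow (-(d : ℝ) / 2 - 1) hz).const_mul (d : ℝ)).mul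
      (innerSL ℝ v).hasFDerivAt).smul (hasFDerivAt_innerSL z))
  have h2 := h.fderiv
  simp only [innerSL_apply_apply] at h2
  erw [h2]
  ext u
  simp [real_inner_comm]
  rw [show -(d : ℝ) / 2 - 1 - 1 = -(d : ℝ) / 2 - 2 by ring]
  ring

/-- The kernel is componentwise harmonic off the origin: summing `fderiv_fderiv_dlKernel` over the
standard basis gives `(d (d + 2) - d · d - 2 d) ‖z‖⁻ᵈ⁻² ⟪z, ·⟫ = 0`. -/
theorem laplacian_dlKernel {d : ℕ} {z : EuclideanSpace ℝ (Fin d)} (hz : z ≠ 0) :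
    ∑ i : Fin d, fderiv ℝ (fun z => fderiv ℝ dlKernel z (EuclideanSpace.single i 1)) z
      (EuclideanSpace.single i 1) = 0 := by
  simp only [fderiv_fderiv_dlKernel hz]
  have hexp : (‖z‖ ^ 2) ^ (-(d : ℝ) / 2 - 1) = (‖z‖ ^ 2) ^ (-(d : ℝ) / 2 - 2) * ‖z‖ ^ 2 := by
    rw [← Real.rpow_add_one (by positivity)]
    congr 1
    ring
  have hsq : ∑ i : Fin d, z i ^ 2 = ‖z‖ ^ 2 := (EuclideanSpace.real_norm_sq_eq z).symm
  ext u
  have hin : ∑ i : Fin d, z i * u i = ⟪z, u⟫ := by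
    simp [PiLp.inner_apply, mul_comm]
  simp only [sum_apply, sub_apply,
    smul_apply, innerSL_apply_apply, EuclideanSpace.inner_single_left,
    PiLp.norm_single, map_one, one_mul, norm_one, smul_eq_mul, one_pow, mul_one,
    Finset.sum_sub_distrib, zero_apply, Finset.sum_const, Finset.card_univ,
    Fintype.card_fin, nsmul_eq_mul]
  simp only [← Finset.sum_mul, ← Finset.mul_sum, mul_assoc, hsq, hin, hexp]
  ring

theorem doubleLayer_harmonic (d : ℕ) (hd : 3 ≤ d) (Ω : Set (EuclideanSpace ℝ (Fin d)))
    (hΩ : Bornology.IsBounded Ω) (n : EuclideanSpace ℝ (Fin d) → EuclideanSpace ℝ (Fin d))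
    (hn_meas : Measurable n) (hn_bdd : ∃ M : ℝ, ∀ y, ‖n y‖ ≤ M)
    (φ : EuclideanSpace ℝ (Fin d) → ℝ)
    (hφ : IntegrableOn φ (frontier Ω) μH[(d : ℝ) - 1]) :
    (∀ x ∉ frontier Ω,
        IntegrableOn (fun y => ⟪y - x, n y⟫ / (omegaD d * ‖x - y‖ ^ (d : ℝ)) * φ y)
          (frontier Ω) μH[(d : ℝ) - 1]) ∧
    IsHarmonicOn
      (fun x => ∫ y in frontier Ω,
        ⟪y - x, n y⟫ / (omegaD d * ‖x - y‖ ^ (d : ℝ)) * φ y ∂μH[(d : ℝ) - 1])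
      (frontier Ω)ᶜ := by
  obtain ⟨M, hM⟩ := hn_bdd
  have hS : IsCompact (frontier Ω) :=
    hΩ.isCompact_closure.of_isClosed_subset isClosed_frontier frontier_subset_closure
  set S := frontier Ω
  set μ : Measure (EuclideanSpace ℝ (Fin d)) := μH[(d : ℝ) - 1]
  have hw : IntegrableOn (fun y => (-((omegaD d)⁻¹ * φ y)) • n y) S μ :=
    ((hφ.const_mul _).neg).smul_bdd M hn_meas.aestronglyMeasurable (.of_forall hM)
  set w := fun y => (-((omegaD d)⁻¹ * φ y)) • n y with hw_def
  -- This holds without any nondegeneracy: both sides vanish when `omegaD d` or `x - y` is zero.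
  have hker : ∀ x y, ⟪y - x, n y⟫ / (omegaD d * ‖x - y‖ ^ (d : ℝ)) * φ y
      = dlKernel (x - y) (w y) := by
    intro x y
    have h1 : (‖x - y‖ ^ 2) ^ (-(d : ℝ) / 2) = (‖x - y‖ ^ (d : ℝ))⁻¹ := by
      rw [← Real.rpow_natCast, ← Real.rpow_mul (norm_nonneg _), ← Real.rpow_neg (norm_nonneg _)]
      congr 1
      push_cast
      ring
    have h2 : ⟪y - x, n y⟫ = -⟪x - y, n y⟫ := by rw [← inner_neg_left, neg_sub]
    simp only [dlKernel, smul_apply, innerSL_apply_apply, hw_def, inner_smul_right, h1, h2,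
      smul_eq_mul]
    rw [div_eq_mul_inv, mul_inv]
    ring
  simp only [hker]
  refine ⟨fun x hx => integrable_kernel (contDiffOn_dlKernel (n := 2)).continuousOn hS hw hx,
    contDiffOn_kernel hS hw 2 contDiffOn_dlKernel, fun x hx => ?_⟩
  have hdir : ∀ v : EuclideanSpace ℝ (Fin d),
      ContDiffOn ℝ 1 (fun z => fderiv ℝ dlKernel z v) {0}ᶜ := fun v =>
    ((contDiffOn_dlKernel (n := 2)).fderiv_of_isOpen isOpen_compl_singleton
      (by norm_num)).clm_apply contDiffOn_const
  have hdir' : ∀ v : EuclideanSpace ℝ (Fin d),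
      ContinuousOn (fun z => fderiv ℝ (fun z => fderiv ℝ dlKernel z v) z v) {0}ᶜ := fun v =>
    ((hdir v).continuousOn_fderiv_of_isOpen isOpen_compl_singleton le_rfl).clm_apply
      continuousOn_const
  have hsecond : ∀ v : EuclideanSpace ℝ (Fin d),
      fderiv ℝ (fun x => fderiv ℝ (fun x => ∫ y in S, dlKernel (x - y) (w y) ∂μ) x v) x v =
        ∫ y in S, fderiv ℝ (fun z => fderiv ℝ dlKernel z v) (x - y) v (w y) ∂μ := by
    intro v
    rw [← fderiv_kernel_apply (hdir v) hS hw hx v]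
    refine congrArg (fun L : EuclideanSpace ℝ (Fin d) →L[ℝ] ℝ => L v)
      (Filter.EventuallyEq.fderiv_eq ?_)
    filter_upwards [hS.isClosed.isOpen_compl.mem_nhds hx] with x' hx'
    exact fderiv_kernel_apply contDiffOn_dlKernel hS hw hx' v
  simp only [laplacian, hsecond]
  rw [← integral_finsetSum _ fun i _ => integrable_kernel (hdir' _) hS hw hx]
  refine integral_eq_zero_of_ae ?_
  filter_upwards [ae_restrict_mem hS.measurableSet] with y hy
  have hz : x - y ≠ 0 := fun h => hx (sub_eq_zero.1 h ▸ hy)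
  rw [← sum_apply, laplacian_dlKernel hz]
  rfl
end

section
/- Let d ≥ 3, let z, w ∈ ℝ^d and r > 0 be such that the closed balls B̄(z,r) and B̄(w,r) are disjoint, and set Λ := B̄(z,r) ∪ B̄(w,r). Suppose W : ℝ^d → ℝ is continuously differentiable on ℝ^d \ (B(z,r) ∪ B(w,r)), harmonic on the exterior domain ℝ^d \ Λ, has vanishing normal derivative on both boundary spheres (∇W(y)·(y−z) = 0 whenever |y−z| = r and ∇W(y)·(y−w) = 0 whenever |y−w| = r), and satisfies W(x) → 0 as |x| → ∞. Then W is identically zero on ℝ^d \ Λ. -/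
/-!
The proof is a maximum-principle argument with an explicit barrier, and uses no integration by
parts. For `a ∈ ℝ^d` the function `barrier a x = -|x - a| ^ (-1/2)` is nonpositive, and since
`d ≥ 3` it is strictly subharmonic away from `a` (`laplacian_barrier_pos`). The sum
`h = barrier z + barrier w` moreover has positive outward normal derivative on both spheres: at a
point of the sphere around `z` the outward slope of `barrier z` is `r ^ (-3/2) / 2`, while the
other barrier contributes at least `-|y - w| ^ (-3/2) / 2`, and `|y - w| > r` by disjointness
(`barrier_flux_pos`).

If `W` were positive at some `x₀` of the closed exterior region, then `W + ε h` would be positive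
at `x₀` for small `ε > 0`. As `W → 0` at infinity and `h ≤ 0`, the function `W + ε h` attains its
maximum over that region. The maximum is not at a point of harmonicity, where
`Δ(W + ε h) = ε Δh > 0` (`not_isLocalMax_of_harmonic`), and it is not on a sphere, where the
outward derivative of `W + ε h` is `ε` times that of `h`, hence positive
(`not_isMaxOn_of_mem_sphere`). So `W ≤ 0`, and likewise `-W ≤ 0`.
-/

open MeasureTheory Metric
open scoped RealInnerProductSpace

/-- A subharmonic barrier: `-|x - a| ^ (-1/2)`, written through `|x - a|²` so that the
derivatives are those of a power of a polynomial. At `x = a` it takes the junk value `0`. -/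
noncomputable def barrier {d : ℕ} (a x : EuclideanSpace ℝ (Fin d)) : ℝ :=
  -(‖x - a‖ ^ 2) ^ (-(1 / 4) : ℝ)

section Barrier

variable {d : ℕ} {a x : EuclideanSpace ℝ (Fin d)}

lemma norm_sub_sq_pos (hx : x ≠ a) : 0 < ‖x - a‖ ^ 2 :=
  pow_pos (norm_pos_iff.2 (sub_ne_zero.2 hx)) 2

lemma barrier_nonpos : barrier a x ≤ 0 := by
  unfold barrier
  have := Real.rpow_nonneg (sq_nonneg ‖x - a‖) (-(1 / 4) : ℝ)
  linarith

lemma hasFDerivAt_norm_sub_sq_rpow (s : ℝ) (hx : x ≠ a) :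
    HasFDerivAt (fun y => (‖y - a‖ ^ 2) ^ s)
      ((2 * s * (‖x - a‖ ^ 2) ^ (s - 1)) • innerSL ℝ (x - a)) x := by
  have h := (((hasFDerivAt_id x).sub_const a).norm_sq).rpow_const (p := s)
    (Or.inl (norm_sub_sq_pos hx).ne')
  refine h.congr_fderiv ?_
  ext v
  simp
  ring

lemma hasFDerivAt_barrier (hx : x ≠ a) :
    HasFDerivAt (barrier a)
      ((1 / 2 * (‖x - a‖ ^ 2) ^ (-(5 / 4) : ℝ)) • innerSL ℝ (x - a)) x := by
  have h := (hasFDerivAt_norm_sub_sq_rpow (-(1 / 4)) hx).neg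
  refine h.congr_fderiv ?_
  rw [← neg_smul]
  norm_num

lemma hasFDerivAt_fderiv_barrier (hx : x ≠ a) (e : EuclideanSpace ℝ (Fin d)) :
    HasFDerivAt (fun y => fderiv ℝ (barrier a) y e)
      ((1 / 2 * (‖x - a‖ ^ 2) ^ (-(5 / 4) : ℝ)) • innerSL ℝ e +
        (-(5 / 4) * (‖x - a‖ ^ 2) ^ (-(9 / 4) : ℝ) * inner ℝ (x - a) e) •
          innerSL ℝ (x - a)) x := by
  have h1 := (hasFDerivAt_norm_sub_sq_rpow (-(5 / 4)) hx).const_mul (1 / 2)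
  have h2 : HasFDerivAt (fun y => inner ℝ (y - a) e) (innerSL ℝ e) x := by
    refine (((hasFDerivAt_id x).sub_const a).inner ℝ (hasFDerivAt_const e x)).congr_fderiv ?_
    ext v
    simp [real_inner_comm]
  have h3 := (h1.mul h2).congr_of_eventuallyEq
    (f₁ := fun y => fderiv ℝ (barrier a) y e) ?_
  · refine h3.congr_fderiv ?_
    ext v
    norm_num
    ring
  · filter_upwards [isOpen_ne.mem_nhds hx] with y hy
    rw [(hasFDerivAt_barrier hy).fderiv]
    rfl

/-- `Δ(-|x - a| ^ (-1/2)) = (d/2 - 5/4) |x - a| ^ (-5/2)`, which is positive when `d ≥ 3`. -/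
lemma laplacian_barrier_pos (hd : 3 ≤ d) (hx : x ≠ a) : 0 < laplacian (barrier a) x := by
  have hp := norm_sub_sq_pos hx
  have hq : (‖x - a‖ ^ 2) ^ (-(5 / 4) : ℝ)
      = (‖x - a‖ ^ 2) ^ (-(9 / 4) : ℝ) * ‖x - a‖ ^ 2 := by
    rw [← Real.rpow_add_one hp.ne']
    norm_num
  have hsum : ∑ i : Fin d, (x i - a i) ^ 2 = ‖x - a‖ ^ 2 := by
    simp [EuclideanSpace.norm_sq_eq]
  have hlap : laplacian (barrier a) x
      = (d / 2 - 5 / 4 : ℝ) * (‖x - a‖ ^ 2) ^ (-(5 / 4) : ℝ) := by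
    unfold laplacian
    calc _ = ∑ i : Fin d, (1 / 2 * (‖x - a‖ ^ 2) ^ (-(5 / 4) : ℝ)
          + -(5 / 4) * (‖x - a‖ ^ 2) ^ (-(9 / 4) : ℝ) * (x i - a i) ^ 2) := by
          refine Finset.sum_congr rfl fun i _ => ?_
          rw [(hasFDerivAt_fderiv_barrier hx _).fderiv]
          simp [EuclideanSpace.inner_single_right]
          ring
      _ = _ := by
          rw [Finset.sum_add_distrib, ← Finset.mul_sum (Finset.univ) (fun i => (x i - a i) ^ 2),
            hsum, hq, Finset.sum_const, Finset.card_univ, Fintype.card_fin, nsmul_eq_mul]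
          ring
  rw [hlap]
  have : (3 : ℝ) ≤ d := by exact_mod_cast hd
  exact mul_pos (by linarith) (Real.rpow_pos_of_pos hp _)

end Barrier

/-- On the sphere around `a` the inward pull of the barrier centred at a farther point `b` is
weaker than the outward slope of the barrier centred at `a`. -/
lemma barrier_flux_pos {d : ℕ} {a b y : EuclideanSpace ℝ (Fin d)} {r : ℝ} (hr : 0 < r)
    (ha : ‖y - a‖ = r) (hb : r < ‖y - b‖) :
    0 < (1 / 2 * (‖y - a‖ ^ 2) ^ (-(5 / 4) : ℝ)) * inner ℝ (y - a) (y - a) +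
      (1 / 2 * (‖y - b‖ ^ 2) ^ (-(5 / 4) : ℝ)) * inner ℝ (y - b) (y - a) := by
  set D := ‖y - b‖ with hD
  have hD0 : 0 < D := hr.trans hb
  have key : ∀ t : ℝ, 0 < t → (t ^ 2) ^ (-(5 / 4) : ℝ) * t = t ^ (-(3 / 2) : ℝ) := by
    intro t ht
    rw [← Real.rpow_natCast, ← Real.rpow_mul ht.le, ← Real.rpow_add_one ht.ne']
    norm_num
  have hin : -(D * r) ≤ inner ℝ (y - b) (y - a) := by
    have := abs_le.1 (abs_real_inner_le_norm (y - b) (y - a))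
    rw [ha, ← hD] at this
    exact this.1
  have hlt : D ^ (-(3 / 2) : ℝ) < r ^ (-(3 / 2) : ℝ) :=
    Real.rpow_lt_rpow_of_neg hr hb (by norm_num)
  have hφ : 0 ≤ (D ^ 2) ^ (-(5 / 4) : ℝ) := Real.rpow_nonneg (sq_nonneg _) _
  rw [real_inner_self_eq_norm_sq, ha]
  have h1 := mul_le_mul_of_nonneg_left hin hφ
  have h2 := key r hr
  have h3 := key D hD0
  have h4 := mul_lt_mul_of_pos_right hlt hr
  rw [← h2, ← h3] at h4
  nlinarith

/-- Second-order necessary condition at a local maximum, along a line. -/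
lemma IsLocalMax.second_fderiv_nonpos {d : ℕ} {F : EuclideanSpace ℝ (Fin d) → ℝ}
    {y : EuclideanSpace ℝ (Fin d)} (hmax : IsLocalMax F y) (e : EuclideanSpace ℝ (Fin d))
    (hF : ∀ᶠ x in nhds y, DifferentiableAt ℝ F x)
    (hF2 : DifferentiableAt ℝ (fun x => fderiv ℝ F x e) y) :
    fderiv ℝ (fun x => fderiv ℝ F x e) y e ≤ 0 := by
  by_contra! hpos
  have hline : ∀ t : ℝ, HasDerivAt (fun t : ℝ => y + t • e) e t := fun t => by
    simpa using ((hasDerivAt_id t).smul_const e).const_add y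
  have hcont : Filter.Tendsto (fun t : ℝ => y + t • e) (nhds 0) (nhds y) := by
    simpa [ContinuousAt] using (hline 0).continuousAt
  have hy0 : y + (0 : ℝ) • e = y := by simp
  have hd1 : deriv (fun t : ℝ => F (y + t • e)) =ᶠ[nhds 0] fun t => fderiv ℝ F (y + t • e) e := by
    filter_upwards [hcont.eventually hF] with t ht
    exact (ht.hasFDerivAt.comp_hasDerivAt t (hline t)).deriv
  have hd2 : HasDerivAt (deriv fun t : ℝ => F (y + t • e))
      (fderiv ℝ (fun x => fderiv ℝ F x e) y e) 0 := by
    refine HasDerivAt.congr_of_eventuallyEq ?_ hd1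
    have : HasFDerivAt (fun x => fderiv ℝ F x e) (fderiv ℝ (fun x => fderiv ℝ F x e) y)
        (y + (0 : ℝ) • e) := by
      rw [hy0]; exact hF2.hasFDerivAt
    exact this.comp_hasDerivAt (0 : ℝ) (hline 0)
  have hmax' : IsLocalMax (fun t : ℝ => F (y + t • e)) 0 := by
    have := hcont.eventually hmax
    filter_upwards [this] with t ht
    simpa using ht
  have hc : ContinuousAt (fun t : ℝ => F (y + t • e)) 0 := by
    have hFc : ContinuousAt F (y + (0 : ℝ) • e) := by
      rw [hy0]; exact hF.self_of_nhds.continuousAt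
    exact ContinuousAt.comp (f := fun t : ℝ => y + t • e) hFc (hline 0).continuousAt
  have hmin : IsLocalMin (fun t : ℝ => F (y + t • e)) 0 :=
    isLocalMin_of_deriv_deriv_pos (by rw [hd2.deriv]; exact hpos) hmax'.deriv_eq_zero hc
  -- A point that is both a local maximum and a local minimum makes the function locally constant.
  have hconst : (fun t : ℝ => F (y + t • e)) =ᶠ[nhds 0] fun _ => F (y + (0 : ℝ) • e) := by
    filter_upwards [hmax', hmin] with t h1 h2
    exact le_antisymm h1 h2
  have h0 := hconst.deriv.deriv_eq
  rw [hd2.deriv] at h0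
  simp at h0
  linarith

/-- At a boundary point of the ball around `a` lying outside the other closed ball, the outward
radial vector points into the exterior region. -/
lemma radial_mem_posTangentCone {d : ℕ} {a b y : EuclideanSpace ℝ (Fin d)} {r : ℝ}
    (ha : ‖y - a‖ = r) (hb : r < ‖y - b‖) :
    y - a ∈ posTangentConeAt (ball a r ∪ ball b r)ᶜ y := by
  refine mem_posTangentConeAt_of_frequently_mem (Filter.Eventually.frequently ?_)
  have hcont : ContinuousAt (fun t : ℝ => ‖y + t • (y - a) - b‖) 0 := by fun_prop
  have h1 : ∀ᶠ t : ℝ in nhdsWithin 0 (Set.Ioi 0), r < ‖y + t • (y - a) - b‖ :=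
    (hcont.eventually (lt_mem_nhds (by simpa using hb))).filter_mono nhdsWithin_le_nhds
  filter_upwards [h1, self_mem_nhdsWithin] with t ht ht0
  have ht0' : 0 < t := ht0
  have hr : 0 ≤ r := ha ▸ norm_nonneg _
  have h2 : ‖y + t • (y - a) - a‖ = (1 + t) * r := by
    rw [show y + t • (y - a) - a = (1 + t) • (y - a) by module, norm_smul, ha,
      Real.norm_of_nonneg (by linarith)]
  simp only [Set.mem_compl_iff, Set.mem_union, mem_ball, dist_eq_norm, not_or, not_lt]
  exact ⟨by rw [h2]; nlinarith, ht.le⟩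

/-- A maximum over the exterior region of `W + ε (barrier a + barrier b)` cannot lie on the sphere
around `a`, where `W` has vanishing normal derivative. -/
lemma not_isMaxOn_of_mem_sphere {d : ℕ} {a b y : EuclideanSpace ℝ (Fin d)} {r ε : ℝ}
    (hr : 0 < r) (hε : 0 < ε) {W : EuclideanSpace ℝ (Fin d) → ℝ}
    {W' : EuclideanSpace ℝ (Fin d) →L[ℝ] ℝ}
    (hW : HasFDerivWithinAt W W' (ball a r ∪ ball b r)ᶜ y)
    (ha : ‖y - a‖ = r) (hb : r < ‖y - b‖) (hN : W' (y - a) = 0) :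
    ¬ IsMaxOn (fun x => W x + ε * (barrier a x + barrier b x)) (ball a r ∪ ball b r)ᶜ y := by
  intro hmax
  have hya : y ≠ a := sub_ne_zero.1 (norm_pos_iff.1 (by rw [ha]; exact hr))
  have hyb : y ≠ b := sub_ne_zero.1 (norm_pos_iff.1 (hr.trans hb))
  have hF := hW.add
    ((((hasFDerivAt_barrier hya).add (hasFDerivAt_barrier hyb)).const_mul ε).hasFDerivWithinAt
      (s := (ball a r ∪ ball b r)ᶜ))
  have h := hmax.localize.hasFDerivWithinAt_nonpos hF (radial_mem_posTangentCone ha hb)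
  have hpos := mul_pos hε (barrier_flux_pos hr ha hb)
  simp only [add_apply, smul_apply, hN, innerSL_apply_apply,
    smul_eq_mul] at h
  linarith

/-- A maximum of `W + ε (barrier a + barrier b)` cannot lie at an interior point of harmonicity,
because that function is strictly subharmonic. -/
lemma not_isLocalMax_of_harmonic {d : ℕ} (hd : 3 ≤ d) {a b y : EuclideanSpace ℝ (Fin d)} {ε : ℝ}
    (hε : 0 < ε) {W : EuclideanSpace ℝ (Fin d) → ℝ} (hW : ContDiffAt ℝ 2 W y)
    (hL : laplacian W y = 0) (hya : y ≠ a) (hyb : y ≠ b) :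
    ¬ IsLocalMax (fun x => W x + ε * (barrier a x + barrier b x)) y := by
  intro hmax
  have hWd : ∀ᶠ x in nhds y, DifferentiableAt ℝ W x :=
    (hW.eventually (by simp)).mono fun x hx => hx.differentiableAt (by simp)
  have hF : ∀ᶠ x in nhds y, HasFDerivAt (fun x => W x + ε * (barrier a x + barrier b x))
      (fderiv ℝ W x + ε • (fderiv ℝ (barrier a) x + fderiv ℝ (barrier b) x)) x := by
    filter_upwards [hWd, isOpen_ne.mem_nhds hya, isOpen_ne.mem_nhds hyb] with x h1 h2 h3
    exact h1.hasFDerivAt.add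
      (((hasFDerivAt_barrier h2).differentiableAt.hasFDerivAt.add
        (hasFDerivAt_barrier h3).differentiableAt.hasFDerivAt).const_mul ε)
  have hF2 : ∀ e, HasFDerivAt
      (fun x => fderiv ℝ (fun x => W x + ε * (barrier a x + barrier b x)) x e)
      (fderiv ℝ (fun x => fderiv ℝ W x e) y +
        ε • (fderiv ℝ (fun x => fderiv ℝ (barrier a) x e) y +
          fderiv ℝ (fun x => fderiv ℝ (barrier b) x e) y)) y := by
    intro e
    have hW2 : DifferentiableAt ℝ (fun x => fderiv ℝ W x e) y :=
      ((hW.fderiv_right (m := 1) (by norm_num)).differentiableAt (by simp)).clm_apply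
        (differentiableAt_const e)
    refine (hW2.hasFDerivAt.add
      (((hasFDerivAt_fderiv_barrier hya e).differentiableAt.hasFDerivAt.add
        (hasFDerivAt_fderiv_barrier hyb e).differentiableAt.hasFDerivAt).const_mul
          ε)).congr_of_eventuallyEq ?_
    filter_upwards [hF] with x hx
    rw [hx.fderiv]
    rfl
  have hsum : laplacian (fun x => W x + ε * (barrier a x + barrier b x)) y
      = laplacian W y + ε * (laplacian (barrier a) y + laplacian (barrier b) y) := by
    simp only [laplacian, (hF2 _).fderiv, add_apply,
      smul_apply, smul_eq_mul, Finset.sum_add_distrib, ← Finset.mul_sum]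
  have hle : laplacian (fun x => W x + ε * (barrier a x + barrier b x)) y ≤ 0 :=
    Finset.sum_nonpos fun i _ => hmax.second_fderiv_nonpos _
      (hF.mono fun x hx => hx.differentiableAt) (hF2 _).differentiableAt
  have := mul_pos hε (add_pos (laplacian_barrier_pos hd hya) (laplacian_barrier_pos hd hyb))
  rw [hsum, hL] at hle
  linarith

/-- One-sided form: a solution of the homogeneous exterior Neumann problem is nonpositive. The
theorem follows by applying this to `W` and to `-W`. The Neumann condition is phrased with some
derivative `W'` relative to the region, which passes to `-W` without unique differentiability. -/
lemma exterior_neumann_nonpos {d : ℕ} (hd : 3 ≤ d)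
    {z w : EuclideanSpace ℝ (Fin d)} {r : ℝ} (hr : 0 < r)
    (hdisj : Disjoint (closedBall z r) (closedBall w r))
    {W : EuclideanSpace ℝ (Fin d) → ℝ}
    (hW1 : ContinuousOn W (ball z r ∪ ball w r)ᶜ)
    (hW2 : IsHarmonicOn W (closedBall z r ∪ closedBall w r)ᶜ)
    (hWz : ∀ y, ‖y - z‖ = r →
      ∃ W' : EuclideanSpace ℝ (Fin d) →L[ℝ] ℝ,
        HasFDerivWithinAt W W' (ball z r ∪ ball w r)ᶜ y ∧ W' (y - z) = 0)
    (hWw : ∀ y, ‖y - w‖ = r →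
      ∃ W' : EuclideanSpace ℝ (Fin d) →L[ℝ] ℝ,
        HasFDerivWithinAt W W' (ball z r ∪ ball w r)ᶜ y ∧ W' (y - w) = 0)
    (hW0 : Filter.Tendsto W (Bornology.cobounded (EuclideanSpace ℝ (Fin d))) (nhds 0))
    {x₀ : EuclideanSpace ℝ (Fin d)} (hx₀ : x₀ ∈ (ball z r ∪ ball w r)ᶜ) : W x₀ ≤ 0 := by
  by_contra! hpos
  set K := (ball z r ∪ ball w r)ᶜ with hK
  have hmem : ∀ {x : EuclideanSpace ℝ (Fin d)}, x ∈ K → r ≤ ‖x - z‖ ∧ r ≤ ‖x - w‖ := by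
    intro x hx
    simpa only [hK, Set.mem_compl_iff, Set.mem_union, mem_ball, dist_eq_norm, not_or, not_lt]
      using hx
  have hne : ∀ {x : EuclideanSpace ℝ (Fin d)}, x ∈ K → x ≠ z ∧ x ≠ w := fun hx =>
    ⟨sub_ne_zero.1 (norm_pos_iff.1 (hr.trans_le (hmem hx).1)),
      sub_ne_zero.1 (norm_pos_iff.1 (hr.trans_le (hmem hx).2))⟩
  -- `ε` is small enough that the perturbed function is still positive at `x₀`.
  obtain ⟨ε, hε, hεpos⟩ : ∃ ε : ℝ, 0 < ε ∧ 0 < W x₀ + ε * (barrier z x₀ + barrier w x₀) := by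
    have hc : ContinuousAt (fun ε : ℝ => W x₀ + ε * (barrier z x₀ + barrier w x₀)) 0 := by
      fun_prop
    have h1 : ∀ᶠ ε : ℝ in nhdsWithin 0 (Set.Ioi 0),
        0 < W x₀ + ε * (barrier z x₀ + barrier w x₀) :=
      (hc.eventually (lt_mem_nhds (by simpa using hpos))).filter_mono nhdsWithin_le_nhds
    obtain ⟨ε, h2, h3⟩ := (h1.and self_mem_nhdsWithin).exists
    exact ⟨ε, h3, h2⟩
  have hcont : ContinuousOn (fun x => W x + ε * (barrier z x + barrier w x)) K := by
    refine hW1.add (continuousOn_const.mul (ContinuousOn.add ?_ ?_))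
    · exact fun x hx => (hasFDerivAt_barrier (hne hx).1).continuousAt.continuousWithinAt
    · exact fun x hx => (hasFDerivAt_barrier (hne hx).2).continuousAt.continuousWithinAt
  have hclosed : IsClosed K := (isOpen_ball.union isOpen_ball).isClosed_compl
  obtain ⟨y, hyK, hmax⟩ := hcont.exists_isMaxOn' hclosed hx₀ (by
    rw [← Metric.cobounded_eq_cocompact]
    refine Filter.Eventually.filter_mono inf_le_left ?_
    filter_upwards [hW0.eventually (gt_mem_nhds hεpos)] with x hx
    have := mul_nonpos_of_nonneg_of_nonpos hε.le
      (add_nonpos (barrier_nonpos (a := z) (x := x)) (barrier_nonpos (a := w) (x := x)))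
    linarith)
  have hfar : ¬ (‖y - z‖ ≤ r ∧ ‖y - w‖ ≤ r) := fun h =>
    Set.disjoint_left.1 hdisj (mem_closedBall_iff_norm.2 h.1) (mem_closedBall_iff_norm.2 h.2)
  rcases (hmem hyK).1.eq_or_lt with hz | hz
  · obtain ⟨W', hW', hN⟩ := hWz y hz.symm
    exact not_isMaxOn_of_mem_sphere hr hε hW' hz.symm
      (not_le.1 fun h => hfar ⟨hz.ge, h⟩) hN hmax
  rcases (hmem hyK).2.eq_or_lt with hw | hw
  · have hKc : K = (ball w r ∪ ball z r)ᶜ := by rw [hK, Set.union_comm]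
    obtain ⟨W', hW', hN⟩ := hWw y hw.symm
    rw [hKc] at hmax hW'
    refine not_isMaxOn_of_mem_sphere hr hε hW' hw.symm hz hN ?_
    simpa only [add_comm (barrier w _)] using hmax
  · have hopen : IsOpen (closedBall z r ∪ closedBall w r)ᶜ :=
      (isClosed_closedBall.union isClosed_closedBall).isOpen_compl
    have hyU : y ∈ (closedBall z r ∪ closedBall w r)ᶜ := by
      simp [dist_eq_norm, hz, hw]
    have hnhds := hopen.mem_nhds hyU
    have hUK : (closedBall z r ∪ closedBall w r)ᶜ ⊆ K :=
      Set.compl_subset_compl.2 (Set.union_subset_union ball_subset_closedBall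
        ball_subset_closedBall)
    exact not_isLocalMax_of_harmonic hd hε (hW2.1.contDiffAt hnhds) (hW2.2 y hyU) (hne hyK).1
      (hne hyK).2 (hmax.isLocalMax (Filter.mem_of_superset hnhds hUK))

lemma IsHarmonicOn.neg {d : ℕ} {f : EuclideanSpace ℝ (Fin d) → ℝ}
    {U : Set (EuclideanSpace ℝ (Fin d))} (hf : IsHarmonicOn f U) :
    IsHarmonicOn (fun x => -f x) U := by
  refine ⟨hf.1.neg, fun x hx => ?_⟩
  have := hf.2 x hx
  unfold laplacian at this ⊢
  simpa [fderiv_fun_neg] using this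

/-- uniqueness for the homogeneous exterior Neumann problem with decay at
infinity, for the union Λ of two disjoint closed balls: a function which is C¹ up to the
boundary, harmonic outside Λ, has vanishing normal derivative on both spheres and tends
to 0 at infinity vanishes identically outside Λ. -/
theorem exterior_neumann_uniqueness (d : ℕ) (hd : 3 ≤ d)
    (z w : EuclideanSpace ℝ (Fin d)) (r : ℝ) (hr : 0 < r)
    (hdisj : Disjoint (Metric.closedBall z r) (Metric.closedBall w r))
    (W : EuclideanSpace ℝ (Fin d) → ℝ)
    (hW1 : ContDiffOn ℝ 1 W (Metric.ball z r ∪ Metric.ball w r)ᶜ)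
    (hW2 : IsHarmonicOn W (Metric.closedBall z r ∪ Metric.closedBall w r)ᶜ)
    (hWz : ∀ y, ‖y - z‖ = r →
      fderivWithin ℝ W (Metric.ball z r ∪ Metric.ball w r)ᶜ y (y - z) = 0)
    (hWw : ∀ y, ‖y - w‖ = r →
      fderivWithin ℝ W (Metric.ball z r ∪ Metric.ball w r)ᶜ y (y - w) = 0)
    (hW0 : Filter.Tendsto W (Bornology.cobounded (EuclideanSpace ℝ (Fin d))) (nhds 0)) :
    Set.EqOn W 0 (Metric.closedBall z r ∪ Metric.closedBall w r)ᶜ := by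
  have hsub : (closedBall z r ∪ closedBall w r)ᶜ ⊆ (ball z r ∪ ball w r)ᶜ :=
    Set.compl_subset_compl.2 (Set.union_subset_union ball_subset_closedBall
      ball_subset_closedBall)
  have hdiff : ∀ y ∈ (ball z r ∪ ball w r)ᶜ, HasFDerivWithinAt W
      (fderivWithin ℝ W (ball z r ∪ ball w r)ᶜ y) (ball z r ∪ ball w r)ᶜ y :=
    fun y hy => (hW1.differentiableOn (by simp) y hy).hasFDerivWithinAt
  have hfar : ∀ y, ¬ (‖y - z‖ ≤ r ∧ ‖y - w‖ ≤ r) := fun y h =>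
    Set.disjoint_left.1 hdisj (mem_closedBall_iff_norm.2 h.1) (mem_closedBall_iff_norm.2 h.2)
  have hmem : ∀ y, ‖y - z‖ = r ∨ ‖y - w‖ = r → y ∈ (ball z r ∪ ball w r)ᶜ := by
    intro y hy
    have := hfar y
    simp only [Set.mem_compl_iff, Set.mem_union, mem_ball, dist_eq_norm, not_or, not_lt]
    rcases hy with h | h
    · exact ⟨h.ge, (not_le.1 fun h' => this ⟨h.le, h'⟩).le⟩
    · exact ⟨(not_le.1 fun h' => this ⟨h', h.le⟩).le, h.ge⟩
  intro x hx
  refine le_antisymm (exterior_neumann_nonpos hd hr hdisj hW1.continuousOn hW2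
    (fun y hy => ⟨_, hdiff y (hmem y (Or.inl hy)), hWz y hy⟩)
    (fun y hy => ⟨_, hdiff y (hmem y (Or.inr hy)), hWw y hy⟩) hW0 (hsub hx)) ?_
  have h := exterior_neumann_nonpos (W := fun x => -W x) hd hr hdisj hW1.continuousOn.neg hW2.neg
    (fun y hy => ⟨_, (hdiff y (hmem y (Or.inl hy))).neg, neg_eq_zero.2 (hWz y hy)⟩)
    (fun y hy => ⟨_, (hdiff y (hmem y (Or.inr hy))).neg, neg_eq_zero.2 (hWw y hy)⟩)
    (by simpa using hW0.neg) (hsub hx)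
  simpa using h
end
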